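/- In the extended Z₃-graded quantum Weyl superalgebra W̃, define T_x = q(x·∂x + θ·∂θ), T_y = q² x·∂y, and T_θ = q² x⁻¹·∂θ. Then these operators form a Z₃-graded quantum Lie superalgebra with q-deformed brackets [A,B]_q = AB − qBA: T_x T_y − q T_y T_x = q T_y, T_x T_θ − q T_θ T_x = q T_θ, T_y T_θ − q T_θ T_y = 0, and moreover (T_y)³ = 0 and (T_θ)³ = 0. -/

import Mathlib

/-!
`W̃`: the extended Z₃-graded quantum Weyl superalgebra, the unital associative
ℂ-algebra with generators `x`, `x⁻¹`, `y`, `θ`, `∂x`, `∂y`, `∂θ`, quotient of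
the free algebra by the two-sided ideal generated by the relations
`x·x⁻¹ = 1 = x⁻¹·x`;  `xy = q·yx`, `xθ = q·θx`, `yθ = q²·θy`, `y³ = 0`, `θ³ = 0`;
`∂x·x = 1 + q·x·∂x + (q−1)·θ·∂θ`, `∂x·y = q²·y·∂x`, `∂x·θ = θ·∂x`,
`∂y·x = q²·x·∂y`, `∂y·θ = q²·θ·∂y`, `∂y·y = 1 + q·y·∂y + (q−1)(x·∂x + θ·∂θ)`,
`∂θ·x = q·x·∂θ`, `∂θ·y = q²·y·∂θ`, `∂θ·θ = 1 + q·θ·∂θ`;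
`∂x·∂y = q²·∂y·∂x`, `∂y·∂θ = q·∂θ·∂y`, `∂θ·∂x = ∂x·∂θ`, `(∂θ)³ = 0`, `(∂y)³ = 0`.
-/

noncomputable section

inductive Gen : Type
  | x | xinv | y | th | px | py | pth

abbrev FA : Type := FreeAlgebra ℂ Gen

def Xf : FA := FreeAlgebra.ι ℂ Gen.x
def XIf : FA := FreeAlgebra.ι ℂ Gen.xinv
def Yf : FA := FreeAlgebra.ι ℂ Gen.y
def Tf : FA := FreeAlgebra.ι ℂ Gen.th
def PXf : FA := FreeAlgebra.ι ℂ Gen.px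
def PYf : FA := FreeAlgebra.ι ℂ Gen.py
def PTf : FA := FreeAlgebra.ι ℂ Gen.pth

/-- The defining relations of the extended Z₃-graded quantum Weyl superalgebra. -/
inductive QRel (q : ℂ) : FA → FA → Prop
  | xxi : QRel q (Xf * XIf) 1
  | xix : QRel q (XIf * Xf) 1
  | xy : QRel q (Xf * Yf) (q • (Yf * Xf))
  | xth : QRel q (Xf * Tf) (q • (Tf * Xf))
  | yth : QRel q (Yf * Tf) ((q ^ 2) • (Tf * Yf))
  | ycube : QRel q (Yf ^ 3) 0
  | thcube : QRel q (Tf ^ 3) 0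
  | pxx : QRel q (PXf * Xf) (1 + q • (Xf * PXf) + (q - 1) • (Tf * PTf))
  | pxy : QRel q (PXf * Yf) ((q ^ 2) • (Yf * PXf))
  | pxth : QRel q (PXf * Tf) (Tf * PXf)
  | pyx : QRel q (PYf * Xf) ((q ^ 2) • (Xf * PYf))
  | pyth : QRel q (PYf * Tf) ((q ^ 2) • (Tf * PYf))
  | pyy : QRel q (PYf * Yf) (1 + q • (Yf * PYf) + (q - 1) • (Xf * PXf + Tf * PTf))
  | pthx : QRel q (PTf * Xf) (q • (Xf * PTf))
  | pthy : QRel q (PTf * Yf) ((q ^ 2) • (Yf * PTf))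
  | pthth : QRel q (PTf * Tf) (1 + q • (Tf * PTf))
  | pxpy : QRel q (PXf * PYf) ((q ^ 2) • (PYf * PXf))
  | pypth : QRel q (PYf * PTf) (q • (PTf * PYf))
  | pthpx : QRel q (PTf * PXf) (PXf * PTf)
  | pthcube : QRel q (PTf ^ 3) 0
  | pycube : QRel q (PYf ^ 3) 0

/-- The extended Z₃-graded quantum Weyl superalgebra `W̃`. -/
abbrev Wtl (q : ℂ) : Type := RingQuot (QRel q)

def Xg (q : ℂ) : Wtl q := RingQuot.mkAlgHom ℂ (QRel q) Xf
def XIg (q : ℂ) : Wtl q := RingQuot.mkAlgHom ℂ (QRel q) XIf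
def Yg (q : ℂ) : Wtl q := RingQuot.mkAlgHom ℂ (QRel q) Yf
def Tg (q : ℂ) : Wtl q := RingQuot.mkAlgHom ℂ (QRel q) Tf
def PXg (q : ℂ) : Wtl q := RingQuot.mkAlgHom ℂ (QRel q) PXf
def PYg (q : ℂ) : Wtl q := RingQuot.mkAlgHom ℂ (QRel q) PYf
def PTg (q : ℂ) : Wtl q := RingQuot.mkAlgHom ℂ (QRel q) PTf

/-!
All the computations are Leibniz rules for the bracket `[a, b]_c = ab - c ba`: if `[a, e]_c` and
`[b, e]_d` are known, so is `[ab, e]_{cd}`. With `E = x ∂x + θ ∂θ` this gives `[E, x]_q = x`,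
`[E, ∂y]_1 = 0` and `[∂θ, E]_q = ∂θ`, and conjugation by `x` turns the first into
`[x⁻¹, E]_q = x⁻¹`. Hence `[E, x ∂y]_q = x ∂y`, while `[x⁻¹ ∂θ, E]_{q²} = (1 + q) x⁻¹ ∂θ`, which is
`[E, x⁻¹ ∂θ]_q = x⁻¹ ∂θ` read backwards because `q³ = 1` and `-q (1 + q) = 1`.
-/

section QBracket

variable {R A : Type*} [CommRing R] [Ring A] [Algebra R A]

/-- The `c`-deformed bracket `[a, b]_c = ab - c ba`. The parameter is left free, since the Leibniz
rules multiply the parameters of two brackets; `[a, b]_c = 0` says that `a` and `b` commute up to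
the scalar `c`. -/
def qBracket (c : R) (a b : A) : A := a * b - c • (b * a)

variable {c d : R} {a b e : A}

theorem qBracket_eq_zero_iff : qBracket c a b = 0 ↔ a * b = c • (b * a) := sub_eq_zero

theorem qBracket_one_eq_zero_iff : qBracket (1 : R) a b = 0 ↔ Commute a b := by
  rw [qBracket_eq_zero_iff, one_smul, Commute, SemiconjBy]

theorem qBracket_add_left (c : R) (a b e : A) :
    qBracket c (a + b) e = qBracket c a e + qBracket c b e := by
  simp only [qBracket, add_mul, mul_add]
  module

theorem qBracket_add_right (c : R) (e a b : A) :
    qBracket c e (a + b) = qBracket c e a + qBracket c e b := by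
  simp only [qBracket, add_mul, mul_add]
  module

theorem qBracket_smul_smul (c r s : R) (a b : A) :
    qBracket c (r • a) (s • b) = (r * s) • qBracket c a b := by
  simp only [qBracket, smul_mul_smul_comm]
  module

theorem qBracket_swap (hcd : c * d = 1) (a b : A) : qBracket c a b = -c • qBracket d b a := by
  simp only [qBracket, smul_sub, smul_smul, neg_mul, hcd]
  module

theorem qBracket_swap_eq_zero (hcd : c * d = 1) (h : qBracket d b a = 0) :
    qBracket c a b = 0 := by
  rw [qBracket_swap hcd, h, smul_zero]

theorem qBracket_mul_left (c d : R) (a b e : A) :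
    qBracket (c * d) (a * b) e = d • (qBracket c a e * b) + a * qBracket d b e := by
  simp only [qBracket, sub_mul, mul_sub, mul_smul_comm, smul_mul_assoc, mul_assoc]
  module

theorem qBracket_mul_right (c d : R) (e a b : A) :
    qBracket (c * d) e (a * b) = qBracket c e a * b + c • (a * qBracket d e b) := by
  simp only [qBracket, sub_mul, mul_sub, mul_smul_comm, smul_mul_assoc, mul_assoc]
  module

theorem qBracket_mul_left_eq_zero (ha : qBracket c a e = 0) (hb : qBracket d b e = 0) :
    qBracket (c * d) (a * b) e = 0 := by
  rw [qBracket_mul_left, ha, hb, zero_mul, smul_zero, mul_zero, add_zero]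

theorem qBracket_mul_right_eq_zero (ha : qBracket c e a = 0) (hb : qBracket d e b = 0) :
    qBracket (c * d) e (a * b) = 0 := by
  rw [qBracket_mul_right, ha, hb, zero_mul, mul_zero, smul_zero, add_zero]

theorem qBracket_units_inv_left (c : R) (u : Aˣ) (e : A) :
    qBracket c (↑u⁻¹ : A) e = ↑u⁻¹ * qBracket c e u * ↑u⁻¹ := by
  simp only [qBracket, mul_sub, sub_mul, mul_smul_comm, smul_mul_assoc, mul_assoc,
    Units.mul_inv, mul_one, Units.inv_mul_cancel_left]

theorem qBracket_units_inv_right_eq_zero (hcd : c * d = 1) {u : Aˣ}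
    (h : qBracket d e (u : A) = 0) : qBracket c e (↑u⁻¹ : A) = 0 :=
  qBracket_swap_eq_zero hcd <| by rw [qBracket_units_inv_left, h, mul_zero, zero_mul]

theorem qBracket_pow_left_eq_zero (h : qBracket c b a = 0) (n : ℕ) :
    qBracket (c ^ n) (b ^ n) a = 0 := by
  induction n with
  | zero => rw [pow_zero, pow_zero, qBracket_one_eq_zero_iff]; exact Commute.one_left a
  | succ n ih => rw [pow_succ, pow_succ]; exact qBracket_mul_left_eq_zero ih h

theorem mul_pow_of_qBracket_eq_zero (h : qBracket c b a = 0) (n : ℕ) :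
    (a * b) ^ n = c ^ n.choose 2 • (a ^ n * b ^ n) := by
  induction n with
  | zero => simp
  | succ n ih =>
    have hba : b ^ n * a = c ^ n • (a * b ^ n) :=
      qBracket_eq_zero_iff.mp (qBracket_pow_left_eq_zero h n)
    calc (a * b) ^ (n + 1) = c ^ n.choose 2 • (a ^ n * (b ^ n * a) * b) := by
          rw [pow_succ, ih, smul_mul_assoc]; simp only [mul_assoc]
      _ = (c ^ n.choose 2 * c ^ n) • (a ^ (n + 1) * b ^ (n + 1)) := by
          rw [hba]
          simp only [mul_smul_comm, smul_mul_assoc, smul_smul, pow_succ, mul_assoc]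
      _ = c ^ (n + 1).choose 2 • (a ^ (n + 1) * b ^ (n + 1)) := by
          rw [Nat.choose_succ_succ' n 1, Nat.choose_one_right, ← pow_add, add_comm]

theorem mul_pow_eq_zero_of_qBracket_eq_zero (h : qBracket c b a = 0) {n : ℕ} (hb : b ^ n = 0) :
    (a * b) ^ n = 0 := by
  rw [mul_pow_of_qBracket_eq_zero h, hb, mul_zero, smul_zero]

end QBracket

/-- Elements `x` (invertible), `θ`, `dx`, `dy`, `dθ` of an algebra satisfying the relations of the
extended quantum Weyl superalgebra that involve neither `y`, nor `θ ^ 3`, nor `dx * θ`: the data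
from which the operators `T_x`, `T_y`, `T_θ` are built. -/
structure IsQuantumWeylSystem {R A : Type*} [CommRing R] [Ring A] [Algebra R A]
    (q : R) (x : Aˣ) (θ dx dy dθ : A) : Prop where
  x_mul_θ : x * θ = q • (θ * x)
  dx_mul_x : dx * x = 1 + q • (x * dx) + (q - 1) • (θ * dθ)
  dy_mul_x : dy * x = q ^ 2 • (x * dy)
  dy_mul_θ : dy * θ = q ^ 2 • (θ * dy)
  dθ_mul_x : dθ * x = q • (x * dθ)
  dθ_mul_θ : dθ * θ = 1 + q • (θ * dθ)
  dx_mul_dy : dx * dy = q ^ 2 • (dy * dx)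
  dy_mul_dθ : dy * dθ = q • (dθ * dy)
  dθ_mul_dx : dθ * dx = dx * dθ
  dθ_pow_three : dθ ^ 3 = 0
  dy_pow_three : dy ^ 3 = 0

namespace IsQuantumWeylSystem

variable {R A : Type*} [CommRing R] [Ring A] [Algebra R A] {q : R} {x : Aˣ} {θ dx dy dθ : A}

theorem qBracket_euler_x (h : IsQuantumWeylSystem q x θ dx dy dθ) :
    qBracket q (x * dx + θ * dθ) (x : A) = x := by
  have hdx : qBracket q dx (x : A) = 1 + (q - 1) • (θ * dθ) := by
    rw [qBracket, h.dx_mul_x]; abel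
  have hx : qBracket q (x * dx) (x : A) = x + (q - 1) • (x * θ * dθ) := by
    have hxx : qBracket (1 : R) (x : A) x = 0 := qBracket_one_eq_zero_iff.mpr (Commute.refl _)
    rw [← one_mul q, qBracket_mul_left, hxx, one_mul, hdx, zero_mul, smul_zero, zero_add,
      mul_add, mul_one, mul_smul_comm, mul_assoc]
  have hθ : qBracket q (θ * dθ) (x : A) = (1 - q) • (x * θ * dθ) := by
    rw [← one_mul q, qBracket_mul_left, qBracket_eq_zero_iff.mpr h.dθ_mul_x, mul_zero, add_zero,
      one_mul, ← smul_mul_assoc, ← smul_mul_assoc, qBracket, one_smul, smul_sub, ← h.x_mul_θ,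
      sub_smul, one_smul]
  rw [qBracket_add_left, hx, hθ]
  module

theorem qBracket_dθ_euler (h : IsQuantumWeylSystem q x θ dx dy dθ) :
    qBracket q dθ (x * dx + θ * dθ) = dθ := by
  have hx : qBracket q dθ (x * dx) = 0 := by
    rw [← mul_one q]
    exact qBracket_mul_right_eq_zero (qBracket_eq_zero_iff.mpr h.dθ_mul_x)
      (qBracket_one_eq_zero_iff.mpr h.dθ_mul_dx)
  have hθ : qBracket q dθ (θ * dθ) = dθ := by
    have hdθ : qBracket q dθ θ = 1 := by rw [qBracket, h.dθ_mul_θ, add_sub_cancel_right]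
    have hself : qBracket (1 : R) dθ dθ = 0 := qBracket_one_eq_zero_iff.mpr (Commute.refl _)
    rw [← mul_one q, qBracket_mul_right, hdθ, hself, one_mul, mul_zero, smul_zero, add_zero]
  rw [qBracket_add_right, hx, hθ, zero_add]

theorem qBracket_x_inv_euler (h : IsQuantumWeylSystem q x θ dx dy dθ) :
    qBracket q (↑x⁻¹ : A) (x * dx + θ * dθ) = ↑x⁻¹ := by
  rw [qBracket_units_inv_left, h.qBracket_euler_x, Units.inv_mul, one_mul]

theorem commute_euler_dy (hq : q ^ 3 = 1) (h : IsQuantumWeylSystem q x θ dx dy dθ) :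
    Commute (x * dx + θ * dθ) dy := by
  have hq' : q * q ^ 2 = 1 := by rw [← pow_succ', hq]
  have hx : qBracket (q * q ^ 2) (x * dx) dy = 0 :=
    qBracket_mul_left_eq_zero (qBracket_swap_eq_zero hq' (qBracket_eq_zero_iff.mpr h.dy_mul_x))
      (qBracket_eq_zero_iff.mpr h.dx_mul_dy)
  have hθ : qBracket (q * q ^ 2) (θ * dθ) dy = 0 :=
    qBracket_mul_left_eq_zero (qBracket_swap_eq_zero hq' (qBracket_eq_zero_iff.mpr h.dy_mul_θ))
      (qBracket_swap_eq_zero (by rw [mul_comm, hq']) (qBracket_eq_zero_iff.mpr h.dy_mul_dθ))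
  rw [← qBracket_one_eq_zero_iff (R := R), ← hq', qBracket_add_left, hx, hθ, add_zero]

theorem qBracket_euler_x_mul_dy (hq : q ^ 3 = 1) (h : IsQuantumWeylSystem q x θ dx dy dθ) :
    qBracket q (x * dx + θ * dθ) (x * dy) = x * dy := by
  rw [← mul_one q, qBracket_mul_right, h.qBracket_euler_x,
    qBracket_one_eq_zero_iff.mpr (h.commute_euler_dy hq), mul_zero, smul_zero, add_zero]

theorem qBracket_euler_x_inv_mul_dθ (hq : q ^ 2 + q + 1 = 0)
    (h : IsQuantumWeylSystem q x θ dx dy dθ) :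
    qBracket q (x * dx + θ * dθ) (↑x⁻¹ * dθ) = ↑x⁻¹ * dθ := by
  have hleft : qBracket (q * q) (↑x⁻¹ * dθ) (x * dx + θ * dθ) = (q + 1) • (↑x⁻¹ * dθ) := by
    rw [qBracket_mul_left, h.qBracket_x_inv_euler, h.qBracket_dθ_euler, add_smul, one_smul]
  have hswap : -q * (q + 1) = 1 := by linear_combination -hq
  rw [qBracket_swap (d := q * q) (by linear_combination (q - 1) * hq), hleft, smul_smul, hswap,
    one_smul]

theorem qBracket_x_mul_dy_x_inv_mul_dθ_eq_zero (hq : q ^ 3 = 1)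
    (h : IsQuantumWeylSystem q x θ dx dy dθ) : qBracket q (x * dy) (↑x⁻¹ * dθ) = 0 := by
  have hx : qBracket (1 * q ^ 2) (x : A) (↑x⁻¹ * dθ) = 0 :=
    qBracket_mul_right_eq_zero
      (qBracket_one_eq_zero_iff.mpr ((Commute.refl (x : A)).units_inv_right))
      (qBracket_swap_eq_zero (by rw [← pow_succ, hq]) (qBracket_eq_zero_iff.mpr h.dθ_mul_x))
  have hdy : qBracket (q * q) dy (↑x⁻¹ * dθ) = 0 :=
    qBracket_mul_right_eq_zero
      (qBracket_units_inv_right_eq_zero (by rw [← pow_succ', hq])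
        (qBracket_eq_zero_iff.mpr h.dy_mul_x))
      (qBracket_eq_zero_iff.mpr h.dy_mul_dθ)
  have hscalar : 1 * q ^ 2 * (q * q) = q := by linear_combination q * hq
  rw [← hscalar]
  exact qBracket_mul_left_eq_zero hx hdy

theorem x_mul_dy_pow_three (h : IsQuantumWeylSystem q x θ dx dy dθ) : (x * dy) ^ 3 = 0 :=
  mul_pow_eq_zero_of_qBracket_eq_zero (qBracket_eq_zero_iff.mpr h.dy_mul_x) h.dy_pow_three

theorem x_inv_mul_dθ_pow_three (hq : q ^ 3 = 1) (h : IsQuantumWeylSystem q x θ dx dy dθ) :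
    (↑x⁻¹ * dθ) ^ 3 = 0 :=
  mul_pow_eq_zero_of_qBracket_eq_zero
    (qBracket_units_inv_right_eq_zero (c := q ^ 2) (by rw [← pow_succ, hq])
      (qBracket_eq_zero_iff.mpr h.dθ_mul_x))
    h.dθ_pow_three

end IsQuantumWeylSystem

theorem z3_graded_lie_superalgebra_general {R A : Type*} [CommRing R] [Ring A] [Algebra R A]
    {q : R} (hq : q ^ 2 + q + 1 = 0) {x : Aˣ} {θ dx dy dθ : A}
    (h : IsQuantumWeylSystem q x θ dx dy dθ) {Tx Ty Tθ : A}
    (hTx : Tx = q • (x * dx + θ * dθ)) (hTy : Ty = q ^ 2 • (x * dy))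
    (hTθ : Tθ = q ^ 2 • (↑x⁻¹ * dθ)) :
    qBracket q Tx Ty = q • Ty ∧ qBracket q Tx Tθ = q • Tθ ∧ qBracket q Ty Tθ = 0 ∧
      Ty ^ 3 = 0 ∧ Tθ ^ 3 = 0 := by
  have hq3 : q ^ 3 = 1 := by linear_combination (q - 1) * hq
  subst hTx hTy hTθ
  refine ⟨?_, ?_, ?_, ?_, ?_⟩
  · rw [qBracket_smul_smul, h.qBracket_euler_x_mul_dy hq3, smul_smul]
  · rw [qBracket_smul_smul, h.qBracket_euler_x_inv_mul_dθ hq, smul_smul]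
  · rw [qBracket_smul_smul, h.qBracket_x_mul_dy_x_inv_mul_dθ_eq_zero hq3, smul_zero]
  · rw [smul_pow, h.x_mul_dy_pow_three, smul_zero]
  · rw [smul_pow, h.x_inv_mul_dθ_pow_three hq3, smul_zero]

/-- The generator `x` of `W̃` as a unit, with inverse the generator `x⁻¹`. -/
def Wtl.xUnit (q : ℂ) : (Wtl q)ˣ where
  val := Xg q
  inv := XIg q
  val_inv := by simpa [Xg, XIg] using RingQuot.mkAlgHom_rel ℂ (QRel.xxi (q := q))
  inv_val := by simpa [Xg, XIg] using RingQuot.mkAlgHom_rel ℂ (QRel.xix (q := q))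

theorem Wtl.isQuantumWeylSystem (q : ℂ) :
    IsQuantumWeylSystem q (Wtl.xUnit q) (Tg q) (PXg q) (PYg q) (PTg q) := by
  have rel {a b : FA} (h : QRel q a b) :
      RingQuot.mkAlgHom ℂ (QRel q) a = RingQuot.mkAlgHom ℂ (QRel q) b :=
    RingQuot.mkAlgHom_rel ℂ h
  exact
    { x_mul_θ := by simpa [Wtl.xUnit, Xg, Tg] using rel .xth
      dx_mul_x := by simpa [Wtl.xUnit, PXg, Xg, Tg, PTg] using rel .pxx
      dy_mul_x := by simpa [Wtl.xUnit, PYg, Xg] using rel .pyx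
      dy_mul_θ := by simpa [PYg, Tg] using rel .pyth
      dθ_mul_x := by simpa [Wtl.xUnit, PTg, Xg] using rel .pthx
      dθ_mul_θ := by simpa [PTg, Tg] using rel .pthth
      dx_mul_dy := by simpa [PXg, PYg] using rel .pxpy
      dy_mul_dθ := by simpa [PYg, PTg] using rel .pypth
      dθ_mul_dx := by simpa [PTg, PXg] using rel .pthpx
      dθ_pow_three := by simpa [PTg] using rel .pthcube
      dy_pow_three := by simpa [PYg] using rel .pycube }

/-- The operators `T_x = q(x·∂x + θ·∂θ)`, `T_y = q²·x·∂y`, `T_θ = q²·x⁻¹·∂θ`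
form a Z₃-graded quantum Lie superalgebra with the q-deformed brackets
`[A,B]_q = AB − qBA`:  `[T_x,T_y]_q = qT_y`, `[T_x,T_θ]_q = qT_θ`,
`[T_y,T_θ]_q = 0`, and `(T_y)³ = 0 = (T_θ)³`. -/
theorem z3_graded_lie_superalgebra (q : ℂ) (hq3 : q ^ 3 = 1) (hq1 : q ≠ 1)
    (Tx Ty Tth : Wtl q)
    (hTx : Tx = q • (Xg q * PXg q + Tg q * PTg q))
    (hTy : Ty = (q ^ 2) • (Xg q * PYg q))
    (hTth : Tth = (q ^ 2) • (XIg q * PTg q)) :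
    Tx * Ty - q • (Ty * Tx) = q • Ty ∧
    Tx * Tth - q • (Tth * Tx) = q • Tth ∧
    Ty * Tth - q • (Tth * Ty) = 0 ∧
    Ty ^ 3 = 0 ∧
    Tth ^ 3 = 0 := by
  have hq : q ^ 2 + q + 1 = 0 :=
    mul_left_cancel₀ (sub_ne_zero.mpr hq1) (by linear_combination hq3)
  exact z3_graded_lie_superalgebra_general hq (Wtl.isQuantumWeylSystem q) hTx hTy hTth
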